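/- Let H be a hierarchical clustering method satisfying the Alternative Axiom of Value (A1'') and the Axiom of Transformation (A2). Then H is equivalent to the unilateral clustering method H^U: for every network (X, A_X), writing u_X = H(X, A_X), it holds that u_X(x,x') = u^U_X(x,x') for all x, x' ∈ X. -/

import Mathlib

noncomputable section

/-- A dissimilarity function on a node set: nonnegative and zero exactly on the diagonal.
It need not be symmetric nor satisfy the triangle inequality. -/
def IsDissim {X : Type} (A : X → X → ℝ) : Prop :=
  (∀ x x', 0 ≤ A x x') ∧ (∀ x x', A x x' = 0 ↔ x = x')

/-- A symmetric dissimilarity. -/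
def IsSym {X : Type} (A : X → X → ℝ) : Prop := ∀ x x', A x x' = A x' x

/-- An ultrametric: nonnegative, zero exactly on the diagonal, symmetric, and
satisfying the strong triangle inequality. -/
def IsUltrametric {X : Type} (u : X → X → ℝ) : Prop :=
  (∀ x x', 0 ≤ u x x') ∧ (∀ x x', u x x' = 0 ↔ x = x') ∧
    (∀ x x', u x x' = u x' x) ∧
    (∀ x x' x'', u x x'' ≤ max (u x x') (u x' x''))

/-- The cost of the chain `x :: l`: the maximum dissimilarity over consecutive links. -/
def chainCost {X : Type} (A : X → X → ℝ) : X → List X → ℝ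
  | _, [] => 0
  | x, y :: l => max (A x y) (chainCost A y l)

/-- The set of costs of chains from `x` to `x'`. -/
def chainCosts {X : Type} (A : X → X → ℝ) (x x' : X) : Set ℝ :=
  {c | ∃ l : List X, (x :: l).getLast (List.cons_ne_nil x l) = x' ∧ chainCost A x l = c}

/-- The directed minimum chain cost `ũ*_X(x,x')`: minimum cost over all chains from `x` to `x'`. -/
def minChainCost {X : Type} (A : X → X → ℝ) (x x' : X) : ℝ :=
  sInf (chainCosts A x x')

/-- The nonreciprocal ultrametric `u^NR`. -/
def nonrecipUltra {X : Type} (A : X → X → ℝ) (x x' : X) : ℝ :=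
  max (minChainCost A x x') (minChainCost A x' x)

/-- The reciprocal ultrametric `u^R`. -/
def recipUltra {X : Type} (A : X → X → ℝ) (x x' : X) : ℝ :=
  minChainCost (fun a b => max (A a b) (A b a)) x x'

/-- The unilateral ultrametric `u^U`. -/
def uniUltra {X : Type} (A : X → X → ℝ) (x x' : X) : ℝ :=
  minChainCost (fun a b => min (A a b) (A b a)) x x'

/-- The minimum loop cost `mlc(X, A_X)`: minimum cost over loops, i.e. chains from some
node `x` back to itself containing at least one node different from `x`. -/
def mlc {X : Type} (A : X → X → ℝ) : ℝ :=
  sInf {c | ∃ (x : X) (l : List X),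
    (x :: l).getLast (List.cons_ne_nil x l) = x ∧ (∃ y ∈ l, y ≠ x) ∧ chainCost A x l = c}

/-- The separation `sep(X, A_X)`: minimum dissimilarity over pairs of distinct nodes. -/
def sep {X : Type} (A : X → X → ℝ) : ℝ :=
  sInf {c | ∃ x x' : X, x ≠ x' ∧ A x x' = c}

/-- A hierarchical clustering method: assigns to every (finite) network an output
two-variable function on the same node set. -/
abbrev HCMethod := ∀ (X : Type) [Fintype X], (X → X → ℝ) → X → X → ℝ

/-- A hierarchical clustering method outputs an ultrametric on every network. -/
def IsHCMethod (H : HCMethod) : Prop :=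
  ∀ (X : Type) [Fintype X] (A : X → X → ℝ), IsDissim A → IsUltrametric (H X A)

/-- `p, q` are the two (distinct) nodes of a two-node set. -/
def TwoNode {X : Type} (p q : X) : Prop := p ≠ q ∧ ∀ x : X, x = p ∨ x = q

/-- Axiom of Value (A1): on every two-node network the output clusters the two nodes at
the maximum of the two dissimilarities. -/
def AxiomValue (H : HCMethod) : Prop :=
  ∀ (X : Type) [Fintype X] (p q : X), TwoNode p q →
    ∀ A : X → X → ℝ, IsDissim A → H X A p q = max (A p q) (A q p)

/-- Axiom of Transformation (A2): dissimilarity-reducing maps do not increase output values. -/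
def AxiomTransform (H : HCMethod) : Prop :=
  ∀ (X Y : Type) [Fintype X] [Fintype Y] (AX : X → X → ℝ) (AY : Y → Y → ℝ),
    IsDissim AX → IsDissim AY →
    ∀ φ : X → Y, (∀ x x', AY (φ x) (φ x') ≤ AX x x') →
    ∀ x x' : X, H Y AY (φ x) (φ x') ≤ H X AX x x'

/-- The canonical dissimilarity `A_{n,α,β}` on `Fin n`: `α` for `i > j`, `β` for `i < j`,
`0` on the diagonal. -/
def canonDissim (n : ℕ) (α β : ℝ) : Fin n → Fin n → ℝ :=
  fun i j => if i = j then 0 else if j < i then α else β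

/-- Extended Axiom of Value (A1'): on every permuted canonical network `Δ_n(α,β,Π)` the
output ultrametric equals `max(α,β)` off the diagonal. -/
def ExtAxiomValue (H : HCMethod) : Prop :=
  ∀ (n : ℕ) (α β : ℝ), 0 < α → 0 < β → ∀ π : Equiv.Perm (Fin n),
    ∀ i j : Fin n, i ≠ j →
      H (Fin n) (fun i j => canonDissim n α β (π i) (π j)) i j = max α β

/-- Alternative Axiom of Value (A1''): on every two-node network the output clusters the
two nodes at the minimum of the two dissimilarities. -/
def AltAxiomValue (H : HCMethod) : Prop :=
  ∀ (X : Type) [Fintype X] (p q : X), TwoNode p q →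
    ∀ A : X → X → ℝ, IsDissim A → H X A p q = min (A p q) (A q p)

/-- Agnostic Axiom of Value (A1'''): on every two-node network the output value lies
between the minimum and maximum of the two dissimilarities. -/
def AgnAxiomValue (H : HCMethod) : Prop :=
  ∀ (X : Type) [Fintype X] (p q : X), TwoNode p q →
    ∀ A : X → X → ℝ, IsDissim A →
      min (A p q) (A q p) ≤ H X A p q ∧ H X A p q ≤ max (A p q) (A q p)

/-!
The two-node network with dissimilarities `A x y` and `A y x` maps onto any pair of nodes `x, y`,
so the axioms force `u(x, y) ≤ min (A x y) (A y x)`, and the strong triangle inequality propagates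
this along chains: `u ≤ u^U`. Conversely, let `δ = u^U(x, x') > 0` and let `S` be the set of nodes
`z` with `u^U(z, x') < δ`. Every link between `S` and its complement has dissimilarity at least `δ`
in both directions, so collapsing `S` and its complement to points maps the network to the two-node
network with both dissimilarities `δ`, and the axioms give `δ ≤ u(x, x')`.
-/

section Chains

variable {X : Type} {B : X → X → ℝ}

theorem chainCost_nonneg (hB : ∀ x y, 0 ≤ B x y) (x : X) (l : List X) : 0 ≤ chainCost B x l := by
  cases l with
  | nil => exact le_rfl
  | cons y l => exact (hB x y).trans (le_max_left _ _)

theorem bddBelow_chainCosts (hB : ∀ x y, 0 ≤ B x y) (x y : X) : BddBelow (chainCosts B x y) := by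
  refine ⟨0, ?_⟩
  rintro _ ⟨l, -, rfl⟩
  exact chainCost_nonneg hB x l

theorem chainCosts_nonempty (B : X → X → ℝ) (x y : X) : (chainCosts B x y).Nonempty :=
  ⟨_, [y], rfl, rfl⟩

theorem max_mem_chainCosts {x y z : X} {c : ℝ} (hc : c ∈ chainCosts B y z) :
    max (B x y) c ∈ chainCosts B x z := by
  obtain ⟨l, hl, rfl⟩ := hc
  exact ⟨y :: l, by rwa [List.getLast_cons (List.cons_ne_nil y l)], rfl⟩

theorem minChainCost_self_nonpos (hB : ∀ x y, 0 ≤ B x y) (x : X) : minChainCost B x x ≤ 0 :=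
  csInf_le (bddBelow_chainCosts hB x x) ⟨[], rfl, rfl⟩

theorem minChainCost_le_max (hB : ∀ x y, 0 ≤ B x y) (x y z : X) :
    minChainCost B x z ≤ max (B x y) (minChainCost B y z) := by
  refine le_of_forall_gt_imp_ge_of_dense fun c hc ↦ ?_
  obtain ⟨hxy, hyz⟩ := max_lt_iff.1 hc
  obtain ⟨d, hd, hdc⟩ := exists_lt_of_csInf_lt (chainCosts_nonempty B y z) hyz
  exact (csInf_le (bddBelow_chainCosts hB x z) (max_mem_chainCosts hd)).trans (max_lt hxy hdc).le

variable {u : X → X → ℝ}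

theorem le_chainCost (hself : ∀ x, u x x ≤ 0) (htri : ∀ x y z, u x z ≤ max (u x y) (u y z))
    (hle : ∀ x y, u x y ≤ B x y) (x : X) (l : List X) :
    u x ((x :: l).getLast (List.cons_ne_nil x l)) ≤ chainCost B x l := by
  induction l generalizing x with
  | nil => exact hself x
  | cons y l ih =>
    rw [List.getLast_cons (List.cons_ne_nil y l)]
    exact (htri x y _).trans (max_le_max (hle x y) (ih y))

theorem le_minChainCost (hself : ∀ x, u x x ≤ 0) (htri : ∀ x y z, u x z ≤ max (u x y) (u y z))
    (hle : ∀ x y, u x y ≤ B x y) (x y : X) : u x y ≤ minChainCost B x y := by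
  refine le_csInf (chainCosts_nonempty B x y) ?_
  rintro _ ⟨l, rfl, rfl⟩
  exact le_chainCost hself htri hle x l

end Chains

theorem IsDissim.pos {X : Type} {A : X → X → ℝ} (hA : IsDissim A) {x y : X} (hxy : x ≠ y) :
    0 < A x y :=
  (hA.1 x y).lt_of_ne' (mt (hA.2 x y).1 hxy)

theorem isDissim_canonDissim (n : ℕ) {α β : ℝ} (hα : 0 < α) (hβ : 0 < β) :
    IsDissim (canonDissim n α β) := by
  constructor <;> intro i j <;> unfold canonDissim <;> split_ifs <;>
    simp [*, hα.le, hβ.le, hα.ne', hβ.ne']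

theorem AltAxiomValue.apply_canonDissim_two {H : HCMethod} (hV : AltAxiomValue H) {α β : ℝ}
    (hα : 0 < α) (hβ : 0 < β) : H (Fin 2) (canonDissim 2 α β) 0 1 = min α β := by
  have htwo : TwoNode (0 : Fin 2) 1 := ⟨by decide, by decide⟩
  rw [hV (Fin 2) 0 1 htwo _ (isDissim_canonDissim 2 hα hβ), min_comm]
  simp [canonDissim]

section Axioms

variable {H : HCMethod} {X : Type} [Fintype X] {A : X → X → ℝ}

theorem AltAxiomValue.apply_le_min (hV : AltAxiomValue H) (hT : AxiomTransform H)
    (hA : IsDissim A) {x y : X} (hxy : x ≠ y) : H X A x y ≤ min (A x y) (A y x) := by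
  have hpos := hA.pos hxy
  have hpos' := hA.pos hxy.symm
  have hself (z : X) : A z z = 0 := (hA.2 z z).2 rfl
  have hreduce (i j : Fin 2) : A (![x, y] i) (![x, y] j) ≤ canonDissim 2 (A y x) (A x y) i j := by
    fin_cases i <;> fin_cases j <;> simp [canonDissim, hself]
  calc H X A x y
      ≤ H (Fin 2) (canonDissim 2 (A y x) (A x y)) 0 1 :=
        hT (Fin 2) X _ A (isDissim_canonDissim 2 hpos' hpos) hA ![x, y] hreduce 0 1
    _ = min (A x y) (A y x) := by rw [hV.apply_canonDissim_two hpos' hpos, min_comm]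

theorem AltAxiomValue.le_apply_of_cut (hV : AltAxiomValue H) (hT : AxiomTransform H)
    (hA : IsDissim A) {δ : ℝ} (hδ : 0 < δ) {S : Set X}
    (hcut : ∀ z ∉ S, ∀ w ∈ S, δ ≤ min (A z w) (A w z)) {x y : X} (hx : x ∉ S) (hy : y ∈ S) :
    δ ≤ H X A x y := by
  classical
  let φ : X → Fin 2 := fun z ↦ if z ∈ S then 1 else 0
  have hreduce (z w : X) : canonDissim 2 δ δ (φ z) (φ w) ≤ A z w := by
    by_cases hz : z ∈ S <;> by_cases hw : w ∈ S
    · simpa [φ, hz, hw, canonDissim] using hA.1 z w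
    · simpa [φ, hz, hw, canonDissim] using (le_min_iff.1 (hcut w hw z hz)).2
    · simpa [φ, hz, hw, canonDissim] using (le_min_iff.1 (hcut z hz w hw)).1
    · simpa [φ, hz, hw, canonDissim] using hA.1 z w
  calc δ = H (Fin 2) (canonDissim 2 δ δ) (φ x) (φ y) := by
        simp only [φ, hx, hy, if_true, if_false, hV.apply_canonDissim_two hδ hδ, min_self]
    _ ≤ H X A x y := hT X (Fin 2) A _ hA (isDissim_canonDissim 2 hδ hδ) φ hreduce x y

theorem AltAxiomValue.uniUltra_le_apply (hV : AltAxiomValue H) (hT : AxiomTransform H)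
    (hA : IsDissim A) {x y : X} (hpos : 0 < uniUltra A x y) : uniUltra A x y ≤ H X A x y := by
  have hmin (z w : X) : 0 ≤ min (A z w) (A w z) := le_min (hA.1 z w) (hA.1 w z)
  refine hV.le_apply_of_cut hT hA hpos (S := {z | uniUltra A z y < uniUltra A x y}) ?_
    (lt_irrefl (uniUltra A x y)) ((minChainCost_self_nonpos hmin y).trans_lt hpos)
  intro z hz w hw
  have hlink : uniUltra A x y ≤ max (min (A z w) (A w z)) (uniUltra A w y) :=
    (not_lt.1 hz).trans (minChainCost_le_max hmin z w y)
  exact (le_max_iff.1 hlink).resolve_right (not_le.2 hw)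

end Axioms

/-- Any method satisfying (A1'') and (A2) coincides with unilateral clustering. -/
theorem unilateral_unique
    (H : HCMethod) (hH : IsHCMethod H) (hA1'' : AltAxiomValue H) (hA2 : AxiomTransform H)
    (X : Type) [Fintype X] (A : X → X → ℝ) (hA : IsDissim A) (x x' : X) :
    H X A x x' = uniUltra A x x' := by
  obtain ⟨hnonneg, hzero, -, htri⟩ := hH X A hA
  have hself (z : X) : H X A z z ≤ 0 := ((hzero z z).2 rfl).le
  have hlink (z w : X) : H X A z w ≤ min (A z w) (A w z) := by
    rcases eq_or_ne z w with rfl | hzw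
    · exact (hself z).trans (le_min (hA.1 z z) (hA.1 z z))
    · exact hA1''.apply_le_min hA2 hA hzw
  apply le_antisymm
  · exact le_minChainCost hself htri hlink x x'
  · rcases le_or_gt (uniUltra A x x') 0 with hnonpos | hpos
    · exact hnonpos.trans (hnonneg x x')
    · exact hA1''.uniUltra_le_apply hA2 hA hpos
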